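/- arXiv:2507.19927 — 4 statements merged into one kernel-verified Lean document; each statement's English description precedes it below -/
import Mathlib

section
/- The Borel subgroup B of SL₂(ℂ) consisting of upper triangular matrices of determinant 1 is cocompact in SL₂(ℂ): there exists a compact subset C ⊆ SL₂(ℂ) such that SL₂(ℂ) = C·B, i.e. every g ∈ SL₂(ℂ) can be written as g = c·b with c ∈ C and b ∈ B. (One may take C = SU(2), the set of unitary matrices of determinant 1, which is compact.) -/
open Matrix Pointwise

/-- The topology on `SL₂(ℂ)` induced from the space of `2 × 2` complex matrices. -/
noncomputable instance : TopologicalSpace (SpecialLinearGroup (Fin 2) ℂ) :=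
  TopologicalSpace.induced (fun g => (g : Matrix (Fin 2) (Fin 2) ℂ)) inferInstance

/-- The Borel subgroup of upper triangular matrices in `SL₂(ℂ)` is cocompact:
there is a compact set `C ⊆ SL₂(ℂ)` such that every `g ∈ SL₂(ℂ)` can be written
as `g = c * b` with `c ∈ C` and `b` upper triangular. -/
theorem borel_cocompact :
    ∃ C : Set (SpecialLinearGroup (Fin 2) ℂ), IsCompact C ∧
      ∀ g : SpecialLinearGroup (Fin 2) ℂ, ∃ c ∈ C, ∃ b : SpecialLinearGroup (Fin 2) ℂ,
        (b : Matrix (Fin 2) (Fin 2) ℂ) 1 0 = 0 ∧ g = c * b := by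
  let K : Set (Matrix (Fin 2) (Fin 2) ℂ) :=
    Set.pi Set.univ (fun _ => Set.pi Set.univ (fun _ => Metric.closedBall (0 : ℂ) 1))
  have hK : IsCompact K :=
    isCompact_univ_pi (fun _ => isCompact_univ_pi (fun _ => isCompact_closedBall (0 : ℂ) 1))
  let f : SpecialLinearGroup (Fin 2) ℂ → Matrix (Fin 2) (Fin 2) ℂ :=
    fun g => (g : Matrix (Fin 2) (Fin 2) ℂ)
  have hf : Topology.IsInducing f := ⟨rfl⟩
  have hr : Set.range f = {A : Matrix (Fin 2) (Fin 2) ℂ | A.det = 1} := by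
    ext A
    constructor
    · rintro ⟨g, rfl⟩
      exact g.2
    · intro h
      exact ⟨⟨A, h⟩, rfl⟩
  have hc : IsClosed (Set.range f) := by
    rw [hr]
    exact isClosed_eq (continuous_id.matrix_det) continuous_const
  refine ⟨f ⁻¹' K, hf.isCompact_preimage hc hK, fun g => ?_⟩
  set a : ℂ := g.1 0 0 with ha
  set c : ℂ := g.1 1 0 with hcdef
  have hdet : a * g.1 1 1 - g.1 0 1 * c = 1 := by
    have := g.2
    rwa [Matrix.det_fin_two] at this
  set r : ℝ := Real.sqrt (‖a‖ ^ 2 + ‖c‖ ^ 2) with hrdef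
  have hs : 0 < ‖a‖ ^ 2 + ‖c‖ ^ 2 := by
    by_contra hneg
    have h1 : ‖a‖ = 0 := by nlinarith [sq_nonneg ‖a‖, sq_nonneg ‖c‖]
    have h2 : ‖c‖ = 0 := by nlinarith [sq_nonneg ‖a‖, sq_nonneg ‖c‖]
    rw [norm_eq_zero] at h1 h2
    rw [h1, h2] at hdet
    simp at hdet
  have hrpos : 0 < r := Real.sqrt_pos.mpr hs
  have hr2 : r ^ 2 = ‖a‖ ^ 2 + ‖c‖ ^ 2 := Real.sq_sqrt hs.le
  have hrC : (r : ℂ) ≠ 0 := by exact_mod_cast hrpos.ne'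
  have hr2C : (r : ℂ) ^ 2 = a * star a + c * star c := by
    have e1 : a * star a = ((‖a‖ ^ 2 : ℝ) : ℂ) := by
      simpa using Complex.mul_conj' a
    have e2 : c * star c = ((‖c‖ ^ 2 : ℝ) : ℂ) := by
      simpa using Complex.mul_conj' c
    rw [e1, e2]
    exact_mod_cast hr2
  have hla : ‖a‖ ≤ r := by
    apply Real.le_sqrt_of_sq_le
    nlinarith [sq_nonneg ‖c‖]
  have hlc : ‖c‖ ≤ r := by
    apply Real.le_sqrt_of_sq_le
    nlinarith [sq_nonneg ‖a‖]
  let k : SpecialLinearGroup (Fin 2) ℂ :=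
    ⟨!![a / r, -(star c) / r; c / r, star a / r], by
      rw [Matrix.det_fin_two_of]
      field_simp
      rw [hr2C]
      ring⟩
  refine ⟨k, ?_, k⁻¹ * g, ?_, by group⟩
  · have hna : ‖a‖ / r ≤ 1 := (div_le_one hrpos).mpr hla
    have hnc : ‖c‖ / r ≤ 1 := (div_le_one hrpos).mpr hlc
    intro i _ j _
    rw [mem_closedBall_zero_iff]
    fin_cases i <;> fin_cases j <;>
      simpa [f, k, abs_of_pos hrpos] using by assumption
  · have h : ((k⁻¹ * g : Matrix.SpecialLinearGroup (Fin 2) ℂ) : Matrix (Fin 2) (Fin 2) ℂ) =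
        Matrix.adjugate k.1 * g.1 := rfl
    have h2 : (Matrix.adjugate k.1 * g.1) 1 0 = 0 := by
      rw [Matrix.adjugate_fin_two, Matrix.mul_apply, Fin.sum_univ_two]
      change -(c / r) * a + (a / r) * c = 0
      ring
    exact (congrFun (congrFun h 1) 0).trans h2
end

section
/- (Failure of the Ahlfors three-point condition at the cusp of the cardioid.) Let c : ℝ → ℂ be the cardioid parametrization c(θ) = (1 − cos θ)·exp(iθ), so c(0) = 0. Then the function θ ↦ ‖c(θ) − c(0)‖ / ‖c(θ) − c(−θ)‖ tends to +∞ (i.e. tends to atTop) as θ → 0 from the right (along the filter 𝓝[>] 0). -/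
open Filter Complex Topology

/-- The cardioid parametrization `c(θ) = (1 - cos θ)·exp(iθ)`. -/
noncomputable def cardioid (θ : ℝ) : ℂ :=
  (1 - Real.cos θ : ℝ) * Complex.exp (θ * Complex.I)

/-- Failure of the Ahlfors three-point condition at the cusp of the cardioid:
`‖c(θ) - c(0)‖ / ‖c(θ) - c(-θ)‖ → +∞` as `θ → 0⁺`. -/
theorem cardioid_ahlfors_ratio_atTop :
    Tendsto (fun θ : ℝ => ‖cardioid θ - cardioid 0‖ / ‖cardioid θ - cardioid (-θ)‖)
      (𝓝[>] 0) atTop := by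
  have hlim : Tendsto (fun θ : ℝ => 2 * Real.sin θ) (𝓝[>] 0) (𝓝[>] 0) := by
    apply tendsto_nhdsWithin_of_tendsto_nhds_of_eventually_within
    · have h : Continuous (fun θ : ℝ => 2 * Real.sin θ) := by fun_prop
      have h2 := h.tendsto 0
      simp only [Real.sin_zero, mul_zero] at h2
      exact h2.mono_left nhdsWithin_le_nhds
    · filter_upwards [Ioo_mem_nhdsGT Real.pi_pos] with θ hθ
      have := Real.sin_pos_of_pos_of_lt_pi hθ.1 hθ.2
      simp only [Set.mem_Ioi]
      positivity
  refine (tendsto_inv_nhdsGT_zero.comp hlim).congr' ?_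
  filter_upwards [Ioo_mem_nhdsGT Real.pi_pos] with θ hθ
  have hs := Real.sin_pos_of_pos_of_lt_pi hθ.1 hθ.2
  have hc : 0 < 1 - Real.cos θ := by
    have := Real.sin_sq_add_cos_sq θ
    nlinarith [Real.cos_le_one θ, Real.neg_one_le_cos θ]
  have h1 : ‖cardioid θ - cardioid 0‖ = 1 - Real.cos θ := by
    have h0 : cardioid 0 = 0 := by simp [cardioid]
    rw [h0, sub_zero, cardioid, norm_mul, Complex.norm_exp_ofReal_mul_I, mul_one,
      Complex.norm_real, Real.norm_of_nonneg hc.le]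
  have h2 : ‖cardioid θ - cardioid (-θ)‖ = (1 - Real.cos θ) * (2 * Real.sin θ) := by
    have h : cardioid θ - cardioid (-θ)
        = (((1 - Real.cos θ) * (2 * Real.sin θ) : ℝ) : ℂ) * Complex.I := by
      simp only [cardioid, Real.cos_neg, Complex.exp_mul_I]
      push_cast
      rw [Complex.cos_neg, Complex.sin_neg]
      ring
    rw [h, norm_mul, Complex.norm_I, mul_one, Complex.norm_real,
      Real.norm_of_nonneg (by positivity)]
  rw [h1, h2]
  simp only [Function.comp]
  field_simp
end

section
/- Let c : ℝ → ℂ be the cardioid parametrization c(θ) = (1 − cos θ)·exp(iθ). Then the three-point ratio blows up at rate 1/θ: precisely, the function θ ↦ θ · ‖c(θ)‖ / ‖c(θ) − c(−θ)‖ tends to 1/2 as θ → 0 from the right (along the filter 𝓝[>] 0). -/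
open Filter Complex Topology

/-- The three-point ratio for the cardioid blows up at rate `1/θ`:
`θ · ‖c(θ)‖ / ‖c(θ) - c(-θ)‖ → 1/2` as `θ → 0⁺`. -/
theorem cardioid_ratio_rate :
    Tendsto (fun θ : ℝ => θ * ‖cardioid θ‖ / ‖cardioid θ - cardioid (-θ)‖)
      (𝓝[>] 0) (𝓝 (1 / 2)) := by
  have hlim : Tendsto (fun θ : ℝ => (2 * Real.sinc θ)⁻¹) (𝓝[>] 0) (𝓝 (1 / 2)) := by
    have h1 : Tendsto Real.sinc (𝓝 0) (𝓝 1) := by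
      have h := Real.continuous_sinc.tendsto 0
      rwa [Real.sinc_zero] at h
    have h2 := (h1.const_mul 2).inv₀ (by norm_num)
    have h3 : ((2 : ℝ) * 1)⁻¹ = 1 / 2 := by norm_num
    rw [h3] at h2
    exact h2.mono_left nhdsWithin_le_nhds
  refine hlim.congr' ?_
  have hmem : Set.Ioo (0 : ℝ) Real.pi ∈ 𝓝[>] (0 : ℝ) := Ioo_mem_nhdsGT Real.pi_pos
  filter_upwards [hmem] with θ hθ
  have hs : 0 < Real.sin θ := Real.sin_pos_of_pos_of_lt_pi hθ.1 hθ.2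
  have hc : 0 < 1 - Real.cos θ := by
    nlinarith [Real.sin_sq_add_cos_sq θ, Real.cos_le_one θ]
  have hn : ‖cardioid θ‖ = 1 - Real.cos θ := by
    rw [cardioid, norm_mul, Complex.norm_exp_ofReal_mul_I, mul_one, Complex.norm_real,
      Real.norm_of_nonneg hc.le]
  have hd : cardioid θ - cardioid (-θ)
      = (((1 - Real.cos θ) * (2 * Real.sin θ) : ℝ) : ℂ) * Complex.I := by
    simp only [cardioid, Real.cos_neg, Complex.exp_mul_I]
    push_cast
    rw [Complex.cos_neg, Complex.sin_neg]
    ring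
  have hdn : ‖cardioid θ - cardioid (-θ)‖ = (1 - Real.cos θ) * (2 * Real.sin θ) := by
    rw [hd, norm_mul, Complex.norm_I, mul_one, Complex.norm_real,
      Real.norm_of_nonneg (by positivity)]
  rw [hn, hdn, Real.sinc_of_ne_zero hθ.1.ne']
  have h0 := hθ.1.ne'
  field_simp
end

section
/- Let λ ∈ ℂ with |λ| > 1, let L : ℂ → ℂ be the affine bijection L(z) = λ·(z + 1) + 1 with fixed point p = (λ + 1)/(1 − λ), and let K ⊆ ℂ be a nonempty compact set. If (n_k) is a sequence of integers with |n_k| → ∞ and the images L^{n_k}(K) (iterates of L for positive indices, of L⁻¹ for negative indices) converge in the space NonemptyCompacts ℂ with the Hausdorff metric to some A, then A is the singleton {p}. -/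
open Filter Topology TopologicalSpace

/-- The `n`-th power (for `n : ℤ`) of the loxodromic affine map `L(z) = λ(z+1)+1`:
for `n ≥ 0` it is the `n`-th iterate of `L`, and for `n < 0` it is the `(-n)`-th
iterate of the inverse `L⁻¹(w) = (w - λ - 1)/λ`. -/
noncomputable def loxZPow (lam : ℂ) (n : ℤ) : ℂ → ℂ :=
  if 0 ≤ n then (fun z : ℂ => lam * (z + 1) + 1)^[n.toNat]
  else (fun w : ℂ => (w - lam - 1) / lam)^[(-n).toNat]

lemma loxZPow_sub (lam : ℂ) (hlam : 1 < ‖lam‖) (n : ℤ) (z : ℂ) :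
    loxZPow lam n z - (lam + 1) / (1 - lam) = lam ^ n * (z - (lam + 1) / (1 - lam)) := by
  have h0 : lam ≠ 0 := by
    rintro rfl
    norm_num at hlam
  have h1 : 1 - lam ≠ 0 := by
    intro h
    have : lam = 1 := (sub_eq_zero.mp h).symm
    subst this
    norm_num at hlam
  have hp : ∀ m : ℕ, ((fun z : ℂ => lam * (z + 1) + 1)^[m]) z - (lam + 1) / (1 - lam)
      = lam ^ m * (z - (lam + 1) / (1 - lam)) := by
    intro m
    induction m with
    | zero => simp
    | succ m ih =>
      rw [Function.iterate_succ_apply', pow_succ', mul_assoc, ← ih]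
      field_simp
      ring
  have hq : ∀ m : ℕ, ((fun w : ℂ => (w - lam - 1) / lam)^[m]) z - (lam + 1) / (1 - lam)
      = lam⁻¹ ^ m * (z - (lam + 1) / (1 - lam)) := by
    intro m
    induction m with
    | zero => simp
    | succ m ih =>
      rw [Function.iterate_succ_apply', pow_succ', mul_assoc, ← ih]
      field_simp
      ring
  unfold loxZPow
  split_ifs with h
  · rw [hp, ← zpow_natCast, Int.toNat_of_nonneg h]
  · rw [hq, ← zpow_natCast, Int.toNat_of_nonneg (by omega), inv_zpow', neg_neg]

/-- If `|λ| > 1`, `K ⊆ ℂ` is nonempty compact, `(n k)` is a sequence of integers with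
`|n k| → ∞`, and the images `L^{n k}(K)` converge in the Hausdorff metric to `A`, then
`A` is the singleton of the fixed point `p = (λ+1)/(1-λ)`. -/
theorem loxodromic_limit_singleton (lam : ℂ) (hlam : 1 < ‖lam‖)
    (K : Set ℂ) (hK : IsCompact K) (hne : K.Nonempty)
    (n : ℕ → ℤ) (hn : Tendsto (fun k => |n k|) atTop atTop)
    (S : ℕ → NonemptyCompacts ℂ) (hS : ∀ k, (S k : Set ℂ) = loxZPow lam (n k) '' K)
    (A : NonemptyCompacts ℂ) (hconv : Tendsto S atTop (𝓝 A)) :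
    (A : Set ℂ) = {(lam + 1) / (1 - lam)} := by
  set p : ℂ := (lam + 1) / (1 - lam) with hp
  have h0 : 0 < ‖lam‖ := by linarith
  have key : ∀ k, ∀ z, dist (loxZPow lam (n k) z) p = ‖lam‖ ^ (n k) * dist z p := by
    intro k z
    rw [dist_eq_norm, loxZPow_sub lam hlam, norm_mul, norm_zpow, dist_eq_norm]
  -- a uniform bound on `K`
  obtain ⟨M, hM⟩ : ∃ M, ∀ z ∈ K, dist z p ≤ M := by
    obtain ⟨M, hM⟩ := hK.isBounded.subset_closedBall p
    exact ⟨M, fun z hz => hM hz⟩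
  have hM0 : 0 ≤ M := by
    obtain ⟨z, hz⟩ := hne
    exact dist_nonneg.trans (hM z hz)
  have hdist : ∀ M' : ℝ, 0 ≤ M' → (∀ z ∈ K, dist z p ≤ M') →
      ∀ k, dist (S k) {p} ≤ ‖lam‖ ^ (n k) * M' := by
    intro M' hM0' hM' k
    rw [Metric.NonemptyCompacts.dist_eq]
    have hz0 : 0 ≤ ‖lam‖ ^ (n k) := (zpow_pos h0 _).le
    apply Metric.hausdorffDist_le_of_mem_dist (by positivity)
    · intro x hx
      rw [hS k] at hx
      obtain ⟨z, hz, rfl⟩ := hx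
      refine ⟨p, by simp, ?_⟩
      rw [key]
      exact mul_le_mul_of_nonneg_left (hM' z hz) hz0
    · intro x hx
      have hx' : x = p := by simpa using hx
      subst hx'
      obtain ⟨z, hz⟩ := hne
      refine ⟨loxZPow lam (n k) z, ?_, ?_⟩
      · rw [hS k]
        exact ⟨z, hz, rfl⟩
      · rw [dist_comm, key]
        exact mul_le_mul_of_nonneg_left (hM' z hz) hz0
  have hlim : Tendsto S atTop (𝓝 {p}) := by
    rw [tendsto_iff_dist_tendsto_zero]
    by_cases hKp : ∀ z ∈ K, z = p
    · have : ∀ k, dist (S k) {p} = 0 := by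
        intro k
        apply le_antisymm _ dist_nonneg
        simpa using hdist 0 le_rfl (fun z hz => by simp [hKp z hz]) k
      simp [this]
    · push Not at hKp
      obtain ⟨z, hz, hzp⟩ := hKp
      have hd : 0 < dist z p := dist_pos.mpr hzp
      obtain ⟨R, hR⟩ := A.isCompact.isBounded.subset_closedBall p
      have hb : ∀ᶠ k in atTop, ‖lam‖ ^ (n k) * dist z p < R + 1 := by
        filter_upwards [Metric.tendsto_nhds.mp hconv 1 one_pos] with k hk
        rw [Metric.NonemptyCompacts.dist_eq] at hk
        have hmem : loxZPow lam (n k) z ∈ (S k : Set ℂ) := by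
          rw [hS k]
          exact ⟨z, hz, rfl⟩
        obtain ⟨y, hy, hxy⟩ := Metric.exists_dist_lt_of_hausdorffDist_lt hmem hk
          (Metric.hausdorffEDist_ne_top_of_nonempty_of_bounded (S k).nonempty A.nonempty
            (S k).isCompact.isBounded A.isCompact.isBounded)
        rw [← key]
        have h1 := dist_triangle (loxZPow lam (n k) z) y p
        have h2 : dist y p ≤ R := hR hy
        linarith
      obtain ⟨N, hN⟩ := pow_unbounded_of_one_lt ((R + 1) / dist z p) hlam
      have hbN : ∀ᶠ k in atTop, n k < N := by
        filter_upwards [hb] with k hk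
        rw [← lt_div_iff₀ hd] at hk
        have := hk.trans hN
        rw [← zpow_natCast] at this
        exact (zpow_lt_zpow_iff_right₀ hlam).mp this
      have hneg : Tendsto (fun k => -n k) atTop atTop := by
        apply tendsto_atTop.mpr
        intro b
        filter_upwards [hbN, hn.eventually_ge_atTop (max b N)] with k h1 h2
        have h3 := (le_max_left _ _).trans h2
        have h4 := (le_max_right _ _).trans h2
        rcases abs_cases (n k) with h | h <;> omega
      have hz : Tendsto (fun k => ‖lam‖ ^ (n k)) atTop (𝓝 0) := by
        have ht : Tendsto (fun k => (-n k).toNat) atTop atTop := by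
          apply tendsto_atTop.mpr
          intro b
          filter_upwards [hneg.eventually_ge_atTop (b : ℤ)] with k hk
          omega
        have h5 := (tendsto_pow_atTop_nhds_zero_of_lt_one (inv_nonneg.mpr h0.le)
          (inv_lt_one_of_one_lt₀ hlam)).comp ht
        refine h5.congr' ?_
        filter_upwards [hneg.eventually_ge_atTop 0] with k hk
        simp only [Function.comp]
        rw [← zpow_natCast, Int.toNat_of_nonneg hk, inv_zpow', neg_neg]
      refine squeeze_zero (fun _ => dist_nonneg) (hdist M hM0 hM) ?_
      simpa using hz.mul_const M
  rw [tendsto_nhds_unique hconv hlim]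
  simp
end
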